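/- Let (V, λ) be a nonsingular symmetric bilinear form over ℤ/2 with dim V = n, let q be a ℤ/4-valued quadratic enhancement of λ, and let v ∈ V be a characteristic element for λ with q(v) = 0 ∈ ℤ/4. Then ∑_{x∈V} i^{q(x)} = ∑_{x∈V, λ(x,x)=0} i^{q(x)}, and this common value equals (√2)ⁿ or −(√2)ⁿ. (This expresses the Brown–Kervaire invariant, which under the hypothesis q(v)=0 lies in 4ℤ/2 ⊂ ℤ/8, as 4 times the Arf invariant of the maximal isotropic subquotient ⟨v⟩⊥/⟨v⟩: the sign equals (−1)^{Arf}.) -/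

import Mathlib

/-! Write `f x = i ^ q(x)` and `G = ∑ f x`. As `v` is characteristic and `q(v) = 0`, one has
`f (x + v) = (-1) ^ λ(x,x) * f x`, so reindexing `G` by `x ↦ x + v` cancels the non-isotropic
terms. For the value, `2 q(x) = ι(λ(x,x))` gives `(f x)² = (-1) ^ λ(x,v)`, and reindexing yields
`G² = ∑_y ∑_x f x * f (x + y) = ∑_y f y * ∑_x (-1) ^ λ(x, y + v)`. By nonsingularity the inner
character sum vanishes unless `y = v`, where it is `|V| = 2ⁿ`; hence `G² = 2ⁿ * f v = 2ⁿ`. -/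

/-- The additive injection `ℤ/2 → ℤ/4` sending `1` to `2`. -/
def iota : ZMod 2 → ZMod 4 := fun a => 2 * (a.val : ZMod 4)

/-- The sign character `a ↦ (-1) ^ a` of `ℤ/2`. -/
def signChar (a : ZMod 2) : ℂ := if a = 0 then 1 else -1

lemma signChar_add (a b : ZMod 2) : signChar (a + b) = signChar a * signChar b := by
  have h2 : ∀ c : ZMod 2, c = 0 ∨ c = 1 := by decide
  have h : (1 : ZMod 2) + 1 = 0 := by decide
  rcases h2 a with rfl | rfl <;> rcases h2 b with rfl | rfl <;> simp [signChar, h]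

lemma I_pow_val_add (a b : ZMod 4) :
    Complex.I ^ (a + b).val = Complex.I ^ a.val * Complex.I ^ b.val := by
  rw [ZMod.val_add, ← pow_add]
  exact (Complex.I_pow_eq_pow_mod _).symm

lemma I_pow_val_iota (a : ZMod 2) : Complex.I ^ (iota a).val = signChar a := by
  have h : (iota 0).val = 0 := by decide
  have h1 : (iota 1).val = 2 := by decide
  have h2 : ∀ c : ZMod 2, c = 0 ∨ c = 1 := by decide
  rcases h2 a with rfl | rfl
  · simp [signChar, h]
  · simp [signChar, h1]

lemma sum_signChar_eq_zero {V : Type*} [AddCommGroup V] [Module (ZMod 2) V] [Fintype V]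
    (g : V →ₗ[ZMod 2] ZMod 2) (hg : g ≠ 0) : ∑ x : V, signChar (g x) = 0 := by
  obtain ⟨x₀, hx₀⟩ : ∃ x, g x ≠ 0 := by
    by_contra! h
    exact hg (LinearMap.ext h)
  have h := (Equiv.sum_comp (Equiv.addRight x₀) (fun x => signChar (g x))).symm
  have h2 : ∀ x, signChar (g (x + x₀)) = -signChar (g x) := by
    intro x
    rw [map_add, signChar_add]
    simp [signChar, hx₀]
  simp only [Equiv.coe_addRight, h2, Finset.sum_neg_distrib] at h
  exact self_eq_neg.mp h

/-- If the characteristic element `v` satisfies `q(v) = 0 ∈ ℤ/4`, the Gauss sum of `q`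
equals the Gauss sum restricted to the isotropic vectors, and equals `±(√2)ⁿ`; the sign
is `(−1)^{Arf}` of the maximal isotropic subquotient, so `BK = 4·Arf ∈ 4ℤ/2 ⊂ ℤ/8`. -/
theorem gauss_sum_of_qv_eq_zero
    {V : Type*} [AddCommGroup V] [Module (ZMod 2) V] [FiniteDimensional (ZMod 2) V]
    [Fintype V]
    (n : ℕ) (hdim : Module.finrank (ZMod 2) V = n)
    (l : V →ₗ[ZMod 2] V →ₗ[ZMod 2] ZMod 2)
    (hsymm : ∀ x y : V, l x y = l y x)
    (hnonsing : Function.Bijective fun x : V => l x)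
    (q : V → ZMod 4)
    (hq : ∀ x y : V, q (x + y) = q x + q y + iota (l x y))
    (v : V) (hv : ∀ x : V, l x x = l x v) (hqv : q v = 0) :
    (∑ x : V, Complex.I ^ (q x).val) =
      (∑ x : V, if l x x = 0 then Complex.I ^ (q x).val else 0) ∧
    ((∑ x : V, Complex.I ^ (q x).val) = ((Real.sqrt 2 : ℝ) : ℂ) ^ n ∨
      (∑ x : V, Complex.I ^ (q x).val) = -(((Real.sqrt 2 : ℝ) : ℂ) ^ n)) := by
  have hq0 : q 0 = 0 := by
    have h := hq 0 0
    simpa [iota] using h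
  have hself : ∀ x : V, x + x = 0 := fun x => by
    rw [← two_smul (ZMod 2) x, show (2 : ZMod 2) = 0 by decide, zero_smul]
  have hf : ∀ x y : V, Complex.I ^ (q (x + y)).val =
      Complex.I ^ (q x).val * Complex.I ^ (q y).val * signChar (l x y) := fun x y => by
    rw [hq, I_pow_val_add, I_pow_val_add, I_pow_val_iota]
  have hss : ∀ a : ZMod 2, signChar a * signChar a = 1 := fun a => by
    unfold signChar; split_ifs <;> norm_num
  have hsq : ∀ x : V, Complex.I ^ (q x).val * Complex.I ^ (q x).val = signChar (l x v) := by
    intro x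
    have h := hf x x
    rw [hself, hq0, hv] at h
    simp only [ZMod.val_zero, pow_zero] at h
    linear_combination (-signChar (l x v)) * h -
      (Complex.I ^ (q x).val * Complex.I ^ (q x).val) * hss (l x v)
  constructor
  · have h := Equiv.sum_comp (Equiv.addRight v) (fun x => Complex.I ^ (q x).val)
    simp only [Equiv.coe_addRight, hf, hqv, ZMod.val_zero, pow_zero, mul_one] at h
    have h2 : ∀ x : V, (if l x x = 0 then Complex.I ^ (q x).val else 0) =
        (Complex.I ^ (q x).val + Complex.I ^ (q x).val * signChar (l x v)) / 2 := fun x => by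
      rw [hv]
      unfold signChar
      split_ifs <;> ring
    simp only [h2]
    rw [← Finset.sum_div, Finset.sum_add_distrib, h]
    ring
  · rw [← sq_eq_sq_iff_eq_or_eq_neg]
    have hcard : (Fintype.card V : ℂ) = 2 ^ n := by
      rw [Module.card_eq_pow_finrank (K := ZMod 2), hdim, ZMod.card]
      norm_num
    have hroot : (((Real.sqrt 2 : ℝ) : ℂ) ^ n) ^ 2 = 2 ^ n := by
      rw [← pow_mul, mul_comm, pow_mul, ← Complex.ofReal_pow, Real.sq_sqrt (by norm_num)]
      norm_num
    have hinner : ∀ y : V, y ≠ v → ∑ x : V, signChar (l x (y + v)) = 0 := by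
      intro y hy
      simp only [hsymm _ (y + v)]
      apply sum_signChar_eq_zero
      intro h0
      have h1 : y + v = 0 := hnonsing.1 (by simpa using h0)
      exact hy (add_right_cancel (h1.trans (hself v).symm))
    rw [hroot, sq, Finset.sum_mul_sum]
    calc ∑ x : V, ∑ y : V, Complex.I ^ (q x).val * Complex.I ^ (q y).val
        = ∑ x : V, ∑ y : V, Complex.I ^ (q x).val * Complex.I ^ (q (x + y)).val :=
          Finset.sum_congr rfl fun x _ => (Equiv.sum_comp (Equiv.addLeft x)
            (fun y => Complex.I ^ (q x).val * Complex.I ^ (q y).val)).symm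
      _ = ∑ y : V, Complex.I ^ (q y).val * ∑ x : V, signChar (l x (y + v)) := by
          rw [Finset.sum_comm]
          refine Finset.sum_congr rfl fun y _ => ?_
          rw [Finset.mul_sum]
          refine Finset.sum_congr rfl fun x _ => ?_
          rw [hf, map_add, signChar_add]
          linear_combination (Complex.I ^ (q y).val * signChar (l x y)) * hsq x
      _ = Complex.I ^ (q v).val * ∑ x : V, signChar (l x (v + v)) := by
          refine Fintype.sum_eq_single v fun y hy => ?_
          rw [hinner y hy, mul_zero]
      _ = 2 ^ n := by
          rw [hself, hqv, ← hcard]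
          simp [signChar]
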